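/- arXiv:2111.01847 — 2 statements merged into one kernel-verified Lean document; each statement's English description precedes it below -/
import Mathlib

section
/- Let (Ω, 𝓕, ℙ) be a probability space, let G : ℝ^d → ℝ^{d×d} satisfy ‖G(y) − G(z)‖_F ≤ M₁‖y − z‖ for all y, z ∈ ℝ^d, let L ∈ ℝ^{d×d}, let y, z ∈ ℝ^d, let 0 < δ ≤ 1, and let S : Ω → ℝ^{d×d} be a square-integrable random matrix with E‖S − (G(y) − L)‖_F² ≤ (1 − δ)‖G(y) − L‖_F². Then E‖L + S − G(z)‖_F² ≤ (1 − δ/4)‖L − G(z)‖_F² + (6/δ − 7/2) M₁² ‖y − z‖². -/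
open Matrix MeasureTheory ProbabilityTheory

/-- Frobenius norm squared: sum of squares of all entries. -/
noncomputable def frobSq {d : ℕ} (M : Matrix (Fin d) (Fin d) ℝ) : ℝ :=
  ∑ i, ∑ j, (M i j) ^ 2

/-- Frobenius norm. -/
noncomputable def frobNorm {d : ℕ} (M : Matrix (Fin d) (Fin d) ℝ) : ℝ :=
  Real.sqrt (frobSq M)

/-!
With `v = G y - L` and `w = G z - L`, the claim compares `E‖S - w‖²` with `‖w‖²`, where `S` is a
contractive compression of `v`. Young's inequality `‖a + b‖² ≤ (1 + ε) ‖a‖² + (1 + ε⁻¹) ‖b‖²` is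
applied twice: once to `S - w = (S - v) + (v - w)`, to bring in the compression error, and once to
`v = w + (v - w)`, to return from `‖v‖²` to `‖w‖²`. Only the triangle inequality is used, so the
argument takes place in an arbitrary seminormed group.
-/

section Young

variable {E : Type*} [SeminormedAddCommGroup E]

theorem norm_add_sq_le_one_add_mul (a b : E) {ε : ℝ} (hε : 0 < ε) :
    ‖a + b‖ ^ 2 ≤ (1 + ε) * ‖a‖ ^ 2 + (1 + ε⁻¹) * ‖b‖ ^ 2 :=
  calc ‖a + b‖ ^ 2 ≤ (‖a‖ + ‖b‖) ^ 2 := by gcongr; exact norm_add_le a b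
    _ = ‖a‖ ^ 2 + ‖b‖ ^ 2 + 2 * ‖a‖ * ‖b‖ := by ring
    _ ≤ ‖a‖ ^ 2 + ‖b‖ ^ 2 + (ε * ‖a‖ ^ 2 + ε⁻¹ * ‖b‖ ^ 2) := by
      gcongr
      exact two_mul_le_add_mul_sq hε
    _ = (1 + ε) * ‖a‖ ^ 2 + (1 + ε⁻¹) * ‖b‖ ^ 2 := by ring

theorem integral_norm_add_sq_le_one_add_mul {α : Type*} [MeasurableSpace α] {μ : Measure α}
    {f g : α → E} (hf : Integrable (fun t => ‖f t‖ ^ 2) μ)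
    (hg : Integrable (fun t => ‖g t‖ ^ 2) μ) {ε : ℝ} (hε : 0 < ε) :
    ∫ t, ‖f t + g t‖ ^ 2 ∂μ
      ≤ (1 + ε) * ∫ t, ‖f t‖ ^ 2 ∂μ + (1 + ε⁻¹) * ∫ t, ‖g t‖ ^ 2 ∂μ := by
  rw [← integral_const_mul, ← integral_const_mul,
    ← integral_add (hf.const_mul _) (hg.const_mul _)]
  -- A non-integrable `‖f + g‖ ^ 2` has integral `0`, which `integral_mono_of_nonneg` allows.
  exact integral_mono_of_nonneg (.of_forall fun t => sq_nonneg ‖f t + g t‖)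
    ((hf.const_mul _).add (hg.const_mul _))
    (.of_forall fun t => norm_add_sq_le_one_add_mul (f t) (g t) hε)

end Young

theorem exists_young_parameters {δ : ℝ} (hδ0 : 0 < δ) (hδ1 : δ ≤ 1) :
    ∃ ε > 0, ∃ η > 0, (1 + ε) * (1 - δ) * (1 + η) ≤ 1 - δ / 4 ∧
      (1 + ε⁻¹) + (1 + ε) * (1 - δ) * (1 + η⁻¹) ≤ 6 / δ - 7 / 2 := by
  have four_sub_pos : 0 < 4 - 3 * δ := by linarith
  have two_sub_pos : 0 < 2 - δ := by linarith
  have one_add_ε : 1 + 2 * δ / (4 - 3 * δ) = (4 - δ) / (4 - 3 * δ) := by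
    rw [one_add_div four_sub_pos.ne']; ring
  have one_add_η : 1 + δ / (2 * (2 - δ)) = (4 - δ) / (2 * (2 - δ)) := by
    rw [one_add_div (by positivity)]; ring
  -- The choice `ε = δ / (2 * (1 - δ))`, for which `(1 + ε) * (1 - δ) = 1 - δ / 2`, breaks down at
  -- `δ = 1`. The smaller `ε` below gives `≤` instead and covers that endpoint.
  refine ⟨2 * δ / (4 - 3 * δ), by positivity, δ / (2 * (2 - δ)), by positivity, ?_, ?_⟩
  · have contraction_le : (4 - δ) / (4 - 3 * δ) * (1 - δ) ≤ 1 - δ / 2 := by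
      rw [div_mul_eq_mul_div, div_le_iff₀ four_sub_pos]
      linarith [sq_nonneg δ]
    calc (1 + 2 * δ / (4 - 3 * δ)) * (1 - δ) * (1 + δ / (2 * (2 - δ)))
        = (4 - δ) / (4 - 3 * δ) * (1 - δ) * ((4 - δ) / (2 * (2 - δ))) := by
          rw [one_add_ε, one_add_η]
      _ ≤ (1 - δ / 2) * ((4 - δ) / (2 * (2 - δ))) := by
          gcongr
          exact div_nonneg (by linarith) (by positivity)
      _ = 1 - δ / 4 := by field_simp; ring
  · have scaled_contraction_le : (4 - δ) / (4 - 3 * δ) * (1 - δ) * (4 - δ) ≤ 4 - 3 * δ := by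
      rw [div_mul_eq_mul_div, div_mul_eq_mul_div, div_le_iff₀ four_sub_pos]
      linarith [pow_pos hδ0 3]
    calc 1 + (2 * δ / (4 - 3 * δ))⁻¹
          + (1 + 2 * δ / (4 - 3 * δ)) * (1 - δ) * (1 + (δ / (2 * (2 - δ)))⁻¹)
        = 2 / δ - 1 / 2 + (4 - δ) / (4 - 3 * δ) * (1 - δ) * (4 - δ) / δ := by
          rw [one_add_ε]; field_simp; ring
      _ ≤ 2 / δ - 1 / 2 + (4 - 3 * δ) / δ := by gcongr
      _ = 6 / δ - 7 / 2 := by field_simp; ring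

section Contraction

variable {E Ω : Type*} [SeminormedAddCommGroup E] [MeasurableSpace Ω] {μ : Measure Ω}
  [IsProbabilityMeasure μ] {S : Ω → E} {δ : ℝ}

theorem integral_norm_sub_sq_le_young_of_contraction {v : E} (w : E) (hδ1 : δ ≤ 1)
    (hSsqint : Integrable (fun t => ‖S t - v‖ ^ 2) μ)
    (hScontr : ∫ t, ‖S t - v‖ ^ 2 ∂μ ≤ (1 - δ) * ‖v‖ ^ 2)
    {ε η : ℝ} (hε : 0 < ε) (hη : 0 < η) :
    ∫ t, ‖S t - w‖ ^ 2 ∂μ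
      ≤ (1 + ε) * (1 - δ) * (1 + η) * ‖w‖ ^ 2
        + ((1 + ε⁻¹) + (1 + ε) * (1 - δ) * (1 + η⁻¹)) * ‖v - w‖ ^ 2 := by
  have compare_target : ∫ t, ‖S t - w‖ ^ 2 ∂μ
      ≤ (1 + ε) * ∫ t, ‖S t - v‖ ^ 2 ∂μ + (1 + ε⁻¹) * ‖v - w‖ ^ 2 := by
    simpa only [sub_add_sub_cancel, integral_const, probReal_univ, one_smul] using
      integral_norm_add_sq_le_one_add_mul hSsqint (integrable_const (‖v - w‖ ^ 2)) hε
  have compare_source : ‖v‖ ^ 2 ≤ (1 + η) * ‖w‖ ^ 2 + (1 + η⁻¹) * ‖v - w‖ ^ 2 := by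
    simpa only [add_sub_cancel] using norm_add_sq_le_one_add_mul w (v - w) hη
  have : 0 ≤ 1 - δ := sub_nonneg.2 hδ1
  calc ∫ t, ‖S t - w‖ ^ 2 ∂μ
      ≤ (1 + ε) * ∫ t, ‖S t - v‖ ^ 2 ∂μ + (1 + ε⁻¹) * ‖v - w‖ ^ 2 := compare_target
    _ ≤ (1 + ε) * ((1 - δ) * ‖v‖ ^ 2) + (1 + ε⁻¹) * ‖v - w‖ ^ 2 := by gcongr
    _ ≤ (1 + ε) * ((1 - δ) * ((1 + η) * ‖w‖ ^ 2 + (1 + η⁻¹) * ‖v - w‖ ^ 2))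
        + (1 + ε⁻¹) * ‖v - w‖ ^ 2 := by gcongr
    _ = _ := by ring

theorem integral_norm_sub_sq_le_one_sub_div_four_mul (v w : E) (hδ0 : 0 < δ) (hδ1 : δ ≤ 1)
    (hSsqint : Integrable (fun t => ‖S t - v‖ ^ 2) μ)
    (hScontr : ∫ t, ‖S t - v‖ ^ 2 ∂μ ≤ (1 - δ) * ‖v‖ ^ 2) :
    ∫ t, ‖S t - w‖ ^ 2 ∂μ
      ≤ (1 - δ / 4) * ‖w‖ ^ 2 + (6 / δ - 7 / 2) * ‖v - w‖ ^ 2 := by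
  obtain ⟨ε, hε, η, hη, coeff_w, coeff_v_sub_w⟩ := exists_young_parameters hδ0 hδ1
  refine (integral_norm_sub_sq_le_young_of_contraction w hδ1 hSsqint hScontr hε hη).trans ?_
  gcongr

theorem hessian_learning_contraction_step_general {X : Type*} [PseudoMetricSpace X]
    (M₁ : ℝ) (G : X → E) (hG : ∀ y z, ‖G y - G z‖ ≤ M₁ * dist y z)
    (L : E) (y z : X) (hδ0 : 0 < δ) (hδ1 : δ ≤ 1)
    (hSsqint : Integrable (fun t => ‖S t - (G y - L)‖ ^ 2) μ)
    (hScontr : ∫ t, ‖S t - (G y - L)‖ ^ 2 ∂μ ≤ (1 - δ) * ‖G y - L‖ ^ 2) :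
    ∫ t, ‖L + S t - G z‖ ^ 2 ∂μ
      ≤ (1 - δ / 4) * ‖L - G z‖ ^ 2 + (6 / δ - 7 / 2) * M₁ ^ 2 * dist y z ^ 2 := by
  have coeff_nonneg : 0 ≤ 6 / δ - 7 / 2 := by
    have : 6 ≤ 6 / δ := le_div_self (by norm_num) hδ0 hδ1
    linarith
  calc ∫ t, ‖L + S t - G z‖ ^ 2 ∂μ = ∫ t, ‖S t - (G z - L)‖ ^ 2 ∂μ := by
        simp only [sub_sub_eq_add_sub, add_comm L]
    _ ≤ (1 - δ / 4) * ‖G z - L‖ ^ 2 + (6 / δ - 7 / 2) * ‖G y - L - (G z - L)‖ ^ 2 :=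
      integral_norm_sub_sq_le_one_sub_div_four_mul _ _ hδ0 hδ1 hSsqint hScontr
    _ = (1 - δ / 4) * ‖L - G z‖ ^ 2 + (6 / δ - 7 / 2) * ‖G y - G z‖ ^ 2 := by
      rw [sub_sub_sub_cancel_right, norm_sub_rev L]
    _ ≤ (1 - δ / 4) * ‖L - G z‖ ^ 2 + (6 / δ - 7 / 2) * (M₁ * dist y z) ^ 2 := by
      gcongr
      exact hG y z
    _ = _ := by rw [mul_pow, mul_assoc]

end Contraction

section Frobenius

open scoped Matrix.Norms.Frobenius

variable {d : ℕ} (M : Matrix (Fin d) (Fin d) ℝ)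

theorem frobNorm_eq_norm : frobNorm M = ‖M‖ := by
  simp only [frobNorm, frobSq, frobenius_norm_def, Real.sqrt_eq_rpow, Real.rpow_two,
    Real.norm_eq_abs, sq_abs]

theorem frobSq_eq_norm_sq : frobSq M = ‖M‖ ^ 2 := by
  rw [← frobNorm_eq_norm, frobNorm, Real.sq_sqrt]
  exact Finset.sum_nonneg fun i _ => Finset.sum_nonneg fun j _ => sq_nonneg (M i j)

end Frobenius

/-- Lemma C.3 (ii): Hessian-coefficient learning step with a contraction compressor with
parameter `δ` and stepsize `α = 1`. -/
theorem hessian_learning_contraction_step (d : ℕ)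
    {Ω : Type*} [MeasureSpace Ω] [IsProbabilityMeasure (ℙ : Measure Ω)]
    (M₁ : ℝ) (G : EuclideanSpace ℝ (Fin d) → Matrix (Fin d) (Fin d) ℝ)
    (hG : ∀ y z, frobNorm (G y - G z) ≤ M₁ * ‖y - z‖)
    (L : Matrix (Fin d) (Fin d) ℝ) (y z : EuclideanSpace ℝ (Fin d))
    (δ : ℝ) (hδ0 : 0 < δ) (hδ1 : δ ≤ 1)
    (S : Ω → Matrix (Fin d) (Fin d) ℝ)
    (hSsqint : Integrable (fun t => frobSq (S t - (G y - L))))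
    (hScontr : (∫ t, frobSq (S t - (G y - L))) ≤ (1 - δ) * frobSq (G y - L)) :
    (∫ t, frobSq (L + S t - G z))
      ≤ (1 - δ / 4) * frobSq (L - G z) + (6 / δ - 7 / 2) * M₁ ^ 2 * ‖y - z‖ ^ 2 := by
  simp only [frobSq_eq_norm_sq, frobNorm_eq_norm, ← dist_eq_norm y z] at hG hSsqint hScontr ⊢
  open scoped Matrix.Norms.Frobenius in
  exact hessian_learning_contraction_step_general M₁ G (fun y z => dist_eq_norm y z ▸ hG y z)
    L y z hδ0 hδ1 hSsqint hScontr
end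

section
/- Let n ≥ 1 and let f_i : ℝ^d → ℝ, i ∈ {1,…,n}, be twice continuously differentiable and μ-strongly convex (μ > 0), with ‖∇²f_i(x) − ∇²f_i(y)‖ ≤ H‖x − y‖ (spectral norm) and ‖∇²f_i(x) − ∇²f_i(y)‖_F ≤ H₁‖x − y‖ for all x, y. Let f := (1/n)Σ_i f_i and let x* satisfy ∇f(x*) = 0. Given points w_i, z_i ∈ ℝ^d and symmetric matrices P_i ∈ ℝ^{d×d}, set l_i := ‖P_i − ∇²f_i(z_i)‖_F and g_i := (P_i + l_i I)w_i − ∇f_i(w_i). Then M := (1/n)Σ_i (P_i + l_i I) satisfies M ⪰ μI (so it is invertible), and the point x⁺ := M⁻¹ ((1/n)Σ_i g_i) satisfies ‖x⁺ − x*‖² ≤ (3H²/(4μ²)) 𝒲² + (12/μ²)·( (1/n)Σ_i ‖P_i − ∇²f_i(x*)‖_F² )·𝒲 + (3H₁²/μ²) 𝒵 𝒲, where 𝒲 := (1/n)Σ_i ‖w_i − x*‖² and 𝒵 := (1/n)Σ_i ‖z_i − x*‖². -/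
open Matrix

/-- Spectral norm (operator 2-norm) of a matrix. -/
noncomputable def specNorm {d : ℕ} (M : Matrix (Fin d) (Fin d) ℝ) : ℝ :=
  ‖Matrix.toEuclideanCLM (𝕜 := ℝ) M‖

/-- The Hessian matrix of `f` at `x` (the derivative of the gradient). -/
noncomputable def hess {d : ℕ} (f : EuclideanSpace ℝ (Fin d) → ℝ)
    (x : EuclideanSpace ℝ (Fin d)) : Matrix (Fin d) (Fin d) ℝ :=
  fun j l => fderiv ℝ (gradient f) x (EuclideanSpace.single l 1) j

/-!
Write `B i = P i + l i • 1` and `A i = ∇²f i (x*)`. Since `∑ i, ∇f i (x*) = 0`, the error of the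
new point satisfies `M (x⁺ - x*) = (1/n) ∑ i, ((B i - A i) (w i - x*) - R i)`, where the Taylor
remainder `R i` of `∇f i` at `x*` has norm at most `H/2 * ‖w i - x*‖²`. The shift by `l i` turns
`P i - ∇²f i (z i)` into a positive semidefinite matrix, hence `M ⪰ μ`, and by the triangle
inequality through `∇²f i (z i)` it costs only
`‖B i - A i‖ ≤ ‖P i - A i‖_F + l i ≤ 2 * ‖P i - A i‖_F + H₁ * ‖z i - x*‖`.
Squaring with `(a + b + c)² ≤ 3 * (a² + b² + c²)` and applying Cauchy–Schwarz to the averages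
gives the three terms.
-/

section Taylor

variable {E G : Type*} [NormedAddCommGroup E] [NormedSpace ℝ E]
  [NormedAddCommGroup G] [NormedSpace ℝ G]

lemma norm_image_sub_sub_fderiv_le_of_convex {s : Set E} (hs : Convex ℝ s) {F : E → G}
    {F' : E → E →L[ℝ] G} (hF : ∀ y ∈ s, HasFDerivWithinAt F (F' y) s y) {x y : E} {H : ℝ}
    (hH : ∀ u ∈ s, ‖F' u - F' x‖ ≤ H * ‖u - x‖) (hx : x ∈ s) (hy : y ∈ s) :
    ‖F y - F x - F' x (y - x)‖ ≤ H / 2 * ‖y - x‖ ^ 2 := by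
  let γ : ℝ → E := AffineMap.lineMap x y
  have hγ_mem : Set.MapsTo γ (Set.Icc 0 1) s := fun t ht => hs.lineMap_mem hx hy ht
  have hγ_sub (t : ℝ) : γ t - x = t • (y - x) := by simp [γ, AffineMap.lineMap_apply]
  let φ : ℝ → G := fun t => F (γ t) - F x - t • F' x (y - x)
  have hφ (t : ℝ) (ht : t ∈ Set.Icc (0 : ℝ) 1) :
      HasDerivWithinAt φ ((F' (γ t) - F' x) (y - x)) (Set.Icc 0 1) t := by
    have hFγ := (hF _ (hγ_mem ht)).comp_hasDerivWithinAt t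
      AffineMap.hasDerivWithinAt_lineMap hγ_mem
    have hline := (hasDerivWithinAt_id t (Set.Icc 0 1)).smul_const (F' x (y - x))
    exact ((hFγ.sub_const (F x)).sub hline).congr_deriv (by simp)
  have hφ' (t : ℝ) (ht : t ∈ Set.Ico (0 : ℝ) 1) :
      ‖(F' (γ t) - F' x) (y - x)‖ ≤ H * ‖y - x‖ ^ 2 * t := calc
    _ ≤ H * ‖γ t - x‖ * ‖y - x‖ :=
      (F' (γ t) - F' x).le_of_opNorm_le (hH _ (hγ_mem (Set.Ico_subset_Icc_self ht))) _
    _ = H * ‖y - x‖ ^ 2 * t := by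
      rw [hγ_sub, norm_smul, Real.norm_of_nonneg ht.1]; ring
  have hB (t : ℝ) : HasDerivAt (fun t => H / 2 * ‖y - x‖ ^ 2 * t ^ 2) (H * ‖y - x‖ ^ 2 * t) t :=
    ((hasDerivAt_pow 2 t).const_mul _).congr_deriv (by push_cast; ring)
  have hφ_le := image_norm_le_of_norm_deriv_right_le_deriv_boundary
    (fun t ht => (hφ t ht).continuousWithinAt)
    (fun t ht => (hφ t (Set.Ico_subset_Icc_self ht)).mono_of_mem_nhdsWithin
      (Icc_mem_nhdsGE_of_mem ht))
    (by simp [φ, γ]) hB hφ' (Set.right_mem_Icc.2 zero_le_one)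
  simpa [φ, γ] using hφ_le

end Taylor

section NewtonStep

variable {ι E G : Type*} [Fintype ι] [NormedAddCommGroup E] [NormedSpace ℝ E]
  [NormedAddCommGroup G] [NormedSpace ℝ G]
  {p : ι → ℝ} {F : ι → E → G} {B : ι → E →L[ℝ] G} {w : ι → E} {x₀ x : E}

lemma sum_smul_newton_sub (A : ι → E →L[ℝ] G) (hx₀ : ∑ i, p i • F i x₀ = 0)
    (hx : (∑ i, p i • B i) x = ∑ i, p i • (B i (w i) - F i (w i))) :
    (∑ i, p i • B i) (x - x₀) = ∑ i, p i •
      ((B i - A i) (w i - x₀) - (F i (w i) - F i x₀ - A i (w i - x₀))) := calc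
  _ = ∑ i, p i • (B i (w i) - F i (w i)) - ∑ i, p i • B i x₀ + ∑ i, p i • F i x₀ := by
    rw [map_sub, hx, hx₀, add_zero]
    simp only [_root_.sum_apply, _root_.smul_apply]
  _ = _ := by
    rw [← Finset.sum_sub_distrib, ← Finset.sum_add_distrib]
    refine Finset.sum_congr rfl fun i _ => ?_
    rw [← smul_sub, ← smul_add, _root_.sub_apply, map_sub, map_sub]
    congr 1
    abel

lemma mul_norm_newton_sub_le (hp : ∀ i, 0 ≤ p i) {F' : ι → E → E →L[ℝ] G}
    (hF : ∀ i y, HasFDerivAt (F i) (F' i y) y) {H : ℝ}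
    (hH : ∀ i y, ‖F' i y - F' i x₀‖ ≤ H * ‖y - x₀‖) (hx₀ : ∑ i, p i • F i x₀ = 0)
    {μ : ℝ} (hμ : ∀ v, μ * ‖v‖ ≤ ‖(∑ i, p i • B i) v‖)
    {b : ι → ℝ} (hb : ∀ i, ‖B i - F' i x₀‖ ≤ b i)
    (hx : (∑ i, p i • B i) x = ∑ i, p i • (B i (w i) - F i (w i))) :
    μ * ‖x - x₀‖ ≤ ∑ i, p i * (H / 2 * ‖w i - x₀‖ ^ 2 + b i * ‖w i - x₀‖) := by
  refine (hμ _).trans ?_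
  rw [sum_smul_newton_sub (fun i => F' i x₀) hx₀ hx]
  refine norm_sum_le_of_le _ fun i _ => ?_
  rw [norm_smul, Real.norm_of_nonneg (hp i), add_comm]
  refine mul_le_mul_of_nonneg_left (norm_sub_le_of_le ?_ ?_) (hp i)
  · exact (B i - F' i x₀).le_of_opNorm_le (hb i) _
  · exact norm_image_sub_sub_fderiv_le_of_convex convex_univ
      (fun y _ => (hF i y).hasFDerivWithinAt) (fun y _ => hH i y) trivial trivial

end NewtonStep

section WeightedSums

variable {ι : Type*} [Fintype ι] {p : ι → ℝ}

lemma sq_sum_weight_mul_mul_le (hp : ∀ i, 0 ≤ p i) (a r : ι → ℝ) :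
    (∑ i, p i * (a i * r i)) ^ 2 ≤ (∑ i, p i * a i ^ 2) * ∑ i, p i * r i ^ 2 :=
  Finset.sum_sq_le_sum_mul_sum_of_sq_le_mul _
    (fun i _ => mul_nonneg (hp i) (sq_nonneg _)) (fun i _ => mul_nonneg (hp i) (sq_nonneg _))
    (fun i _ => by ring_nf; rfl)

lemma sq_sum_weight_mul_quadratic_le (hp : ∀ i, 0 ≤ p i) (α β γ : ℝ) (r a ζ : ι → ℝ) :
    (∑ i, p i * (α * r i ^ 2 + (β * a i + γ * ζ i) * r i)) ^ 2 ≤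
      3 * (α ^ 2 * (∑ i, p i * r i ^ 2) ^ 2
        + β ^ 2 * ((∑ i, p i * a i ^ 2) * ∑ i, p i * r i ^ 2)
        + γ ^ 2 * ((∑ i, p i * ζ i ^ 2) * ∑ i, p i * r i ^ 2)) := by
  have sum_eq : ∑ i, p i * (α * r i ^ 2 + (β * a i + γ * ζ i) * r i) =
      α * ∑ i, p i * r i ^ 2 + β * ∑ i, p i * (a i * r i) + γ * ∑ i, p i * (ζ i * r i) := by
    simp only [Finset.mul_sum, ← Finset.sum_add_distrib]
    exact Finset.sum_congr rfl fun i _ => by ring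
  have three_squares (u v w : ℝ) : (u + v + w) ^ 2 ≤ 3 * (u ^ 2 + v ^ 2 + w ^ 2) := by
    simpa [Fin.sum_univ_three] using
      sq_sum_le_card_mul_sum_sq (s := Finset.univ) (f := ![u, v, w])
  calc
    _ ≤ 3 * (α ^ 2 * (∑ i, p i * r i ^ 2) ^ 2 + β ^ 2 * (∑ i, p i * (a i * r i)) ^ 2
          + γ ^ 2 * (∑ i, p i * (ζ i * r i)) ^ 2) := by
      simpa only [sum_eq, mul_pow] using three_squares (α * ∑ i, p i * r i ^ 2)
        (β * ∑ i, p i * (a i * r i)) (γ * ∑ i, p i * (ζ i * r i))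
    _ ≤ _ := by gcongr <;> exact sq_sum_weight_mul_mul_le hp _ _

end WeightedSums

section LoewnerOrder

open scoped ComplexOrder

variable {𝕜 E : Type*} [RCLike 𝕜] [NormedAddCommGroup E] [InnerProductSpace 𝕜 E]

lemma isPositive_add_smul_one {T : E →L[𝕜] E} (hT : T.IsSymmetric) {l : ℝ} (hl : ‖T‖ ≤ l) :
    (T + (l : 𝕜) • (1 : E →L[𝕜] E)).IsPositive := by
  refine ⟨hT.add (LinearMap.IsSymmetric.one.smul (RCLike.conj_ofReal l)), fun x => ?_⟩
  have h_abs : |RCLike.re (inner 𝕜 (T x) x)| ≤ l * ‖x‖ ^ 2 := calc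
    _ ≤ ‖T x‖ * ‖x‖ := (RCLike.abs_re_le_norm _).trans (norm_inner_le_norm _ _)
    _ ≤ l * ‖x‖ * ‖x‖ := by gcongr; exact T.le_of_opNorm_le hl x
    _ = l * ‖x‖ ^ 2 := by ring
  simp only [ContinuousLinearMap.reApplyInnerSelf_apply, _root_.add_apply, _root_.smul_apply,
    one_apply_eq_self, inner_add_left, inner_smul_left, RCLike.conj_ofReal,
    inner_self_eq_norm_sq_to_K, map_add, RCLike.mul_re, RCLike.ofReal_re, RCLike.re_ofReal_pow,
    RCLike.ofReal_im, RCLike.im_ofReal_pow, mul_zero, sub_zero]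
  linarith [neg_le_of_abs_le h_abs]

lemma mul_norm_le_norm_apply_of_isPositive {T : E →L[𝕜] E} {μ : ℝ}
    (hT : (T - (μ : 𝕜) • (1 : E →L[𝕜] E)).IsPositive) (x : E) : μ * ‖x‖ ≤ ‖T x‖ := by
  rcases (norm_nonneg x).eq_or_lt with hx | hx
  · simp [← hx]
  refine le_of_mul_le_mul_left ?_ hx
  calc
    ‖x‖ * (μ * ‖x‖) ≤ RCLike.re (inner 𝕜 x (T x)) := by
      have h_nonneg := hT.re_inner_nonneg_right x
      simp only [_root_.sub_apply, _root_.smul_apply, one_apply_eq_self, inner_sub_right,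
        inner_smul_right, inner_self_eq_norm_sq_to_K, map_sub, RCLike.mul_re, RCLike.ofReal_re,
        RCLike.re_ofReal_pow, RCLike.ofReal_im, RCLike.im_ofReal_pow, mul_zero, sub_zero,
        sub_nonneg] at h_nonneg
      linarith
    _ ≤ ‖x‖ * ‖T x‖ := re_inner_le_norm _ _

variable {m : Type*} [DecidableEq m]

lemma posSemidef_sum_smul_sub_smul_one {ι : Type*} [Fintype ι] {p : ι → ℝ} (hp : ∀ i, 0 ≤ p i)
    (hp_sum : ∑ i, p i = 1) {μ : ℝ} {B : ι → Matrix m m 𝕜}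
    (hB : ∀ i, (B i - μ • (1 : Matrix m m 𝕜)).PosSemidef) :
    (∑ i, p i • B i - μ • (1 : Matrix m m 𝕜)).PosSemidef := by
  have sum_eq : ∑ i, p i • B i - μ • (1 : Matrix m m 𝕜) =
      ∑ i, p i • (B i - μ • (1 : Matrix m m 𝕜)) := by
    simp only [smul_sub, Finset.sum_sub_distrib, ← Finset.sum_smul, hp_sum, one_smul]
  exact sum_eq ▸ posSemidef_sum _ fun i _ => (hB i).smul (hp i)

variable [Fintype m]

lemma isUnit_of_posSemidef_sub_smul_one {M : Matrix m m 𝕜} {μ : ℝ} (hμ : 0 < μ)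
    (hM : (M - μ • (1 : Matrix m m 𝕜)).PosSemidef) : IsUnit M := by
  have hM_pos : M.PosDef := by simpa using (PosDef.one.smul hμ).add_posSemidef hM
  exact hM_pos.isUnit

lemma toEuclideanCLM_apply_inv_apply {M : Matrix m m 𝕜} (hM : IsUnit M)
    (x : EuclideanSpace 𝕜 m) :
    toEuclideanCLM (𝕜 := 𝕜) M (toEuclideanCLM (𝕜 := 𝕜) M⁻¹ x) = x := by
  rw [← mul_apply_eq_comp, ← map_mul, M.mul_nonsing_inv ((isUnit_iff_isUnit_det _).1 hM),
    map_one, one_apply_eq_self]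

lemma isPositive_toEuclideanCLM_iff {A : Matrix m m 𝕜} :
    (toEuclideanCLM (𝕜 := 𝕜) A).IsPositive ↔ A.PosSemidef :=
  isPositive_toEuclideanLin_iff

lemma mul_norm_le_norm_toEuclideanCLM {A : Matrix m m 𝕜} {μ : ℝ}
    (hA : (A - μ • (1 : Matrix m m 𝕜)).PosSemidef) (x : EuclideanSpace 𝕜 m) :
    μ * ‖x‖ ≤ ‖toEuclideanCLM (𝕜 := 𝕜) A x‖ := by
  rw [← isPositive_toEuclideanCLM_iff, RCLike.real_smul_eq_coe_smul (K := 𝕜), map_sub, map_smul,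
    map_one] at hA
  exact mul_norm_le_norm_apply_of_isPositive hA x

lemma posSemidef_add_smul_one {A : Matrix m m 𝕜} (hA : A.IsHermitian) {l : ℝ}
    (hl : ‖toEuclideanCLM (𝕜 := 𝕜) A‖ ≤ l) : (A + l • (1 : Matrix m m 𝕜)).PosSemidef := by
  rw [← isPositive_toEuclideanCLM_iff, RCLike.real_smul_eq_coe_smul (K := 𝕜), map_add, map_smul,
    map_one]
  exact isPositive_add_smul_one (isSymmetric_toEuclideanLin_iff.2 hA) hl

lemma posSemidef_add_smul_one_sub_smul_one {A P : Matrix m m 𝕜} (hP : P.IsHermitian) {μ l : ℝ}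
    (hA : (A - μ • (1 : Matrix m m 𝕜)).PosSemidef)
    (hl : ‖toEuclideanCLM (𝕜 := 𝕜) (P - A)‖ ≤ l) :
    (P + l • (1 : Matrix m m 𝕜) - μ • (1 : Matrix m m 𝕜)).PosSemidef := by
  have hA_herm : A.IsHermitian := by
    simpa using hA.isHermitian.add (isHermitian_one.smul (IsSelfAdjoint.all μ))
  convert (posSemidef_add_smul_one (hP.sub hA_herm) hl).add hA using 1
  abel

end LoewnerOrder

section FrobeniusNorm

variable {d : ℕ}

open scoped Matrix.Norms.Frobenius in
lemma frobNorm_eq_norm_s14 (A : Matrix (Fin d) (Fin d) ℝ) : frobNorm A = ‖A‖ := by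
  simp [frobNorm, frobSq, frobenius_norm_def, Real.sqrt_eq_rpow]

lemma frobNorm_nonneg (A : Matrix (Fin d) (Fin d) ℝ) : 0 ≤ frobNorm A := Real.sqrt_nonneg _

lemma sq_frobNorm (A : Matrix (Fin d) (Fin d) ℝ) : frobNorm A ^ 2 = frobSq A :=
  Real.sq_sqrt (Finset.sum_nonneg fun _ _ => Finset.sum_nonneg fun _ _ => sq_nonneg _)

open scoped Matrix.Norms.Frobenius in
lemma frobNorm_sub_le_add (A B C : Matrix (Fin d) (Fin d) ℝ) :
    frobNorm (A - C) ≤ frobNorm (A - B) + frobNorm (B - C) := by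
  simpa only [frobNorm_eq_norm_s14] using norm_sub_le_norm_sub_add_norm_sub A B C

open scoped Matrix.Norms.Frobenius in
lemma specNorm_le_frobNorm (A : Matrix (Fin d) (Fin d) ℝ) : specNorm A ≤ frobNorm A := by
  refine ContinuousLinearMap.opNorm_le_bound _ (frobNorm_nonneg A) fun x => ?_
  rw [frobNorm_eq_norm_s14]
  have h := frobenius_norm_mul A (replicateCol Unit x.ofLp)
  rwa [← replicateCol_mulVec, frobenius_norm_replicateCol, frobenius_norm_replicateCol] at h

lemma norm_toEuclideanCLM_add_smul_one_sub_le {P A C : Matrix (Fin d) (Fin d) ℝ} {l : ℝ}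
    (hl₀ : 0 ≤ l) (hl : l ≤ frobNorm (P - C)) :
    ‖toEuclideanCLM (𝕜 := ℝ) (P + l • (1 : Matrix (Fin d) (Fin d) ℝ)) - toEuclideanCLM (𝕜 := ℝ) A‖
      ≤ 2 * frobNorm (P - A) + frobNorm (A - C) := calc
  _ = ‖toEuclideanCLM (𝕜 := ℝ) (P - A) + l • (1 : EuclideanSpace ℝ (Fin d) →L[ℝ] _)‖ := by
    rw [← map_sub, add_sub_right_comm, map_add, map_smul, map_one]
  _ ≤ frobNorm (P - A) + l := by
    refine norm_add_le_of_le (specNorm_le_frobNorm _) ?_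
    rw [norm_smul, Real.norm_of_nonneg hl₀]
    exact mul_le_of_le_one_right hl₀ ContinuousLinearMap.norm_id_le
  _ ≤ 2 * frobNorm (P - A) + frobNorm (A - C) := by linarith [frobNorm_sub_le_add P A C]

end FrobeniusNorm

section Gradient

lemma gradient_sum_mul {ι E : Type*} [Fintype ι] [NormedAddCommGroup E] [InnerProductSpace ℝ E]
    [CompleteSpace E] {f : ι → E → ℝ} {x : E} (hf : ∀ i, DifferentiableAt ℝ (f i) x)
    (p : ι → ℝ) : gradient (fun y => ∑ i, p i * f i y) x = ∑ i, p i • gradient (f i) x := by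
  have hsum := HasFDerivAt.fun_sum fun i (_ : i ∈ Finset.univ) => (hf i).hasFDerivAt.const_mul (p i)
  simp [gradient, hsum.fderiv]

lemma differentiable_gradient {E : Type*} [NormedAddCommGroup E] [InnerProductSpace ℝ E]
    [CompleteSpace E] {f : E → ℝ} (hf : ContDiff ℝ 2 f) : Differentiable ℝ (gradient f) :=
  (InnerProductSpace.toDual ℝ E).symm.differentiable.comp
    ((hf.fderiv_right (m := 1) (by norm_num)).differentiable (by norm_num))

variable {d : ℕ} {f : EuclideanSpace ℝ (Fin d) → ℝ}

lemma toEuclideanCLM_hess (x : EuclideanSpace ℝ (Fin d)) :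
    toEuclideanCLM (𝕜 := ℝ) (hess f x) = fderiv ℝ (gradient f) x := by
  apply ContinuousLinearMap.coe_injective
  refine (EuclideanSpace.basisFun (Fin d) ℝ).toBasis.ext fun l => ?_
  ext j
  simp [hess]

lemma hasFDerivAt_gradient_hess (hf : ContDiff ℝ 2 f) (x : EuclideanSpace ℝ (Fin d)) :
    HasFDerivAt (gradient f) (toEuclideanCLM (𝕜 := ℝ) (hess f x)) x :=
  toEuclideanCLM_hess x ▸ (differentiable_gradient hf x).hasFDerivAt

end Gradient

theorem bl2_one_step_estimate_general {ι : Type*} [Fintype ι] {d : ℕ} {p : ι → ℝ}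
    (hp : ∀ i, 0 ≤ p i) (hp_sum : ∑ i, p i = 1)
    {F : ι → EuclideanSpace ℝ (Fin d) → EuclideanSpace ℝ (Fin d)}
    {J : ι → EuclideanSpace ℝ (Fin d) → Matrix (Fin d) (Fin d) ℝ}
    (hF : ∀ i x, HasFDerivAt (F i) (toEuclideanCLM (𝕜 := ℝ) (J i x)) x)
    {w z : ι → EuclideanSpace ℝ (Fin d)} {xstar : EuclideanSpace ℝ (Fin d)}
    (hstar : ∑ i, p i • F i xstar = 0)
    {μ : ℝ} (hμ : 0 < μ)
    (hJ : ∀ i, (J i (z i) - μ • (1 : Matrix (Fin d) (Fin d) ℝ)).PosSemidef)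
    {H H₁ : ℝ} (hH : ∀ i x, specNorm (J i x - J i xstar) ≤ H * ‖x - xstar‖)
    (hH₁ : ∀ i, frobNorm (J i xstar - J i (z i)) ≤ H₁ * ‖xstar - z i‖)
    {P : ι → Matrix (Fin d) (Fin d) ℝ} (hP : ∀ i, (P i).IsSymm)
    {l : ι → ℝ} (hl_spec : ∀ i, specNorm (P i - J i (z i)) ≤ l i)
    (hl_frob : ∀ i, l i ≤ frobNorm (P i - J i (z i)))
    {M : Matrix (Fin d) (Fin d) ℝ}
    (hM : M = ∑ i, p i • (P i + l i • (1 : Matrix (Fin d) (Fin d) ℝ)))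
    {g : ι → EuclideanSpace ℝ (Fin d)}
    (hg : ∀ i, g i = toEuclideanCLM (𝕜 := ℝ)
      (P i + l i • (1 : Matrix (Fin d) (Fin d) ℝ)) (w i) - F i (w i)) :
    (M - μ • (1 : Matrix (Fin d) (Fin d) ℝ)).PosSemidef ∧ IsUnit M ∧
    ‖toEuclideanCLM (𝕜 := ℝ) M⁻¹ (∑ i, p i • g i) - xstar‖ ^ 2
      ≤ (3 * H ^ 2 / (4 * μ ^ 2)) * (∑ i, p i * ‖w i - xstar‖ ^ 2) ^ 2
        + (12 / μ ^ 2) * (∑ i, p i * frobSq (P i - J i xstar)) * (∑ i, p i * ‖w i - xstar‖ ^ 2)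
        + (3 * H₁ ^ 2 / μ ^ 2) * (∑ i, p i * ‖z i - xstar‖ ^ 2)
          * (∑ i, p i * ‖w i - xstar‖ ^ 2) := by
  have hM_psd : (M - μ • (1 : Matrix (Fin d) (Fin d) ℝ)).PosSemidef :=
    hM ▸ posSemidef_sum_smul_sub_smul_one hp hp_sum fun i =>
      posSemidef_add_smul_one_sub_smul_one (hP i) (hJ i) (hl_spec i)
  have hM_unit : IsUnit M := isUnit_of_posSemidef_sub_smul_one hμ hM_psd
  refine ⟨hM_psd, hM_unit, ?_⟩
  have hM_sum : toEuclideanCLM (𝕜 := ℝ) M = ∑ i, p i • toEuclideanCLM (𝕜 := ℝ)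
      (P i + l i • (1 : Matrix (Fin d) (Fin d) ℝ)) := by simp only [hM, map_sum, map_smul]
  have h_dist : μ * ‖toEuclideanCLM (𝕜 := ℝ) M⁻¹ (∑ i, p i • g i) - xstar‖ ≤
      ∑ i, p i * (H / 2 * ‖w i - xstar‖ ^ 2
        + (2 * frobNorm (P i - J i xstar) + H₁ * ‖xstar - z i‖) * ‖w i - xstar‖) :=
    mul_norm_newton_sub_le hp hF
      (fun i x => by simpa only [specNorm, map_sub] using hH i x) hstar
      (by simpa only [hM_sum] using mul_norm_le_norm_toEuclideanCLM hM_psd)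
      (fun i => (norm_toEuclideanCLM_add_smul_one_sub_le (A := J i xstar)
        ((norm_nonneg _).trans (hl_spec i)) (hl_frob i)).trans
        (add_le_add_right (hH₁ i) _))
      (by simpa only [hM_sum, hg] using toEuclideanCLM_apply_inv_apply hM_unit (∑ i, p i • g i))
  have h_sq := (pow_le_pow_left₀ (by positivity) h_dist 2).trans
    (sq_sum_weight_mul_quadratic_le hp _ _ _ _ _ _)
  simp only [sq_frobNorm, norm_sub_rev xstar, mul_pow] at h_sq
  refine ((le_div_iff₀' (by positivity)).2 h_sq).trans_eq ?_
  field_simp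
  ring

/-- The key deterministic one-step estimate in the analysis of BL2. -/
theorem bl2_one_step_estimate (d n : ℕ) (hn : 1 ≤ n)
    (f : Fin n → EuclideanSpace ℝ (Fin d) → ℝ)
    (hf : ∀ i, ContDiff ℝ 2 (f i))
    (μ : ℝ) (hμ : 0 < μ)
    (hsc : ∀ i x, ((hess (f i) x) - μ • (1 : Matrix (Fin d) (Fin d) ℝ)).PosSemidef)
    (H H₁ : ℝ)
    (hH : ∀ i x y, specNorm (hess (f i) x - hess (f i) y) ≤ H * ‖x - y‖)
    (hH₁ : ∀ i x y, frobNorm (hess (f i) x - hess (f i) y) ≤ H₁ * ‖x - y‖)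
    (fbar : EuclideanSpace ℝ (Fin d) → ℝ)
    (hfbar : fbar = fun x => (1 / (n : ℝ)) * ∑ i, f i x)
    (xstar : EuclideanSpace ℝ (Fin d)) (hstar : gradient fbar xstar = 0)
    (w z : Fin n → EuclideanSpace ℝ (Fin d))
    (P : Fin n → Matrix (Fin d) (Fin d) ℝ) (hP : ∀ i, (P i).IsSymm)
    (l : Fin n → ℝ) (hl : ∀ i, l i = frobNorm (P i - hess (f i) (z i)))
    (g : Fin n → EuclideanSpace ℝ (Fin d))
    (hg : ∀ i, g i = Matrix.toEuclideanCLM (𝕜 := ℝ)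
        (P i + l i • (1 : Matrix (Fin d) (Fin d) ℝ)) (w i) - gradient (f i) (w i))
    (M : Matrix (Fin d) (Fin d) ℝ)
    (hM : M = (1 / (n : ℝ)) • ∑ i, (P i + l i • (1 : Matrix (Fin d) (Fin d) ℝ)))
    (𝒲 𝒵 : ℝ)
    (h𝒲 : 𝒲 = (1 / (n : ℝ)) * ∑ i, ‖w i - xstar‖ ^ 2)
    (h𝒵 : 𝒵 = (1 / (n : ℝ)) * ∑ i, ‖z i - xstar‖ ^ 2) :
    (M - μ • (1 : Matrix (Fin d) (Fin d) ℝ)).PosSemidef ∧ IsUnit M ∧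
    ‖Matrix.toEuclideanCLM (𝕜 := ℝ) M⁻¹ ((1 / (n : ℝ)) • ∑ i, g i) - xstar‖ ^ 2
      ≤ (3 * H ^ 2 / (4 * μ ^ 2)) * 𝒲 ^ 2
        + (12 / μ ^ 2) * ((1 / (n : ℝ)) * ∑ i, frobSq (P i - hess (f i) xstar)) * 𝒲
        + (3 * H₁ ^ 2 / μ ^ 2) * 𝒵 * 𝒲 := by
  have hn0 : (n : ℝ) ≠ 0 := by positivity
  have hgrad : ∑ i, (1 / (n : ℝ)) • gradient (f i) xstar = 0 := by
    simpa only [hfbar, Finset.mul_sum,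
      gradient_sum_mul fun i => (hf i).differentiable two_ne_zero _] using hstar
  subst h𝒲 h𝒵
  simpa only [Finset.mul_sum, Finset.smul_sum] using bl2_one_step_estimate_general
    (p := fun _ => 1 / (n : ℝ)) (fun _ => by positivity) (by simp [hn0])
    (fun i => hasFDerivAt_gradient_hess (hf i)) hgrad hμ (fun i => hsc i (z i))
    (fun i x => hH i x xstar) (fun i => hH₁ i xstar (z i)) hP
    (fun i => hl i ▸ specNorm_le_frobNorm _) (fun i => (hl i).le)
    (by rw [hM, Finset.smul_sum]) hg
end
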